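/- Let D be a weakly connected directed graph and e any edge of D. Then the h*-polynomial of the extended root polytope Q̃_{D/e} of the contraction is coefficientwise less than or equal to the h*-polynomial of Q̃_D. -/

import Mathlib

open Finset Pointwise

noncomputable section

variable {V E ι : Type*}

/-- The vector `x_f ∈ ℝ^V` of an edge `f` with tail `t f` and head `h f`:
`+1` at the head, `-1` at the tail, `0` elsewhere (so `0` for a loop). -/
def xvec [DecidableEq V] (t h : E → V) (f : E) : V → ℝ :=
  fun v => (if v = h f then 1 else 0) - (if v = t f then 1 else 0)

/-- The extended root polytope of the subgraph with edge set `S`: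
`conv({0} ∪ {x_f : f ∈ S})`. -/
def rootPolyOn [DecidableEq V] (t h : E → V) (S : Set E) : Set (V → ℝ) :=
  convexHull ℝ ({0} ∪ (xvec t h '' S))

/-- The underlying (simple) undirected graph of the edges in `S`. -/
def underlyingOn (t h : E → V) (S : Set E) : SimpleGraph V :=
  SimpleGraph.fromRel (fun u v => ∃ f ∈ S, t f = u ∧ h f = v)

/-- A spanning tree: a set of edges whose underlying graph is connected and which
has `|V| - 1` edges. -/
def IsSpanningTree [Fintype V] (t h : E → V) (T : Finset E) : Prop :=
  (underlyingOn t h ↑T).Connected ∧ T.card + 1 = Fintype.card V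

/-- The number of lattice points of the `k`-th dilate of `Q`. -/
def latCount [Fintype ι] (Q : Set (ι → ℝ)) (k : ℕ) : ℕ :=
  Nat.card {p : ι → ℤ // (fun i => (p i : ℝ)) ∈ (k : ℝ) • Q}

/-- The Ehrhart series of `Q` as a formal power series. -/
def ehrSeries [Fintype ι] (Q : Set (ι → ℝ)) : PowerSeries ℤ :=
  PowerSeries.mk fun k => (latCount Q k : ℤ)

/-- The dimension of a polytope: the rank of its vector span. -/
def pdim (Q : Set (ι → ℝ)) : ℕ := Module.finrank ℝ ↥(vectorSpan ℝ Q)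

/-- `p` is the `h^*`-polynomial of `Q`: `(1-t)^{dim Q + 1} · Ehr_Q(t) = p(t)`. -/
def IsHStar [Fintype ι] (Q : Set (ι → ℝ)) (p : Polynomial ℤ) : Prop :=
  (1 - PowerSeries.X) ^ (pdim Q + 1) * ehrSeries Q = PowerSeries.mk fun i => p.coeff i

/-- The `±1` vector of a signed cycle with positive arc `Cp` and negative arc `Cm`. -/
def chiVec [DecidableEq E] (Cp Cm : Finset E) : E → ℝ :=
  fun f => (if f ∈ Cp then 1 else 0) - (if f ∈ Cm then 1 else 0)

/-- A circulation: an assignment of reals to edges with zero net flow at each vertex. -/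
def IsCirculation [Fintype E] [DecidableEq V] (t h : E → V) (φ : E → ℝ) : Prop :=
  ∑ f, φ f • xvec t h f = 0

/-- `(Cp, Cm)` is a signed cycle: the arcs are disjoint, the union is nonempty, the
`±1` vector is a circulation, and the support `Cp ∪ Cm` is minimal among supports of
nonzero circulations (i.e. it is a circuit of the graphic oriented matroid). -/
def IsSignedCycle [Fintype E] [DecidableEq E] [DecidableEq V] (t h : E → V)
    (Cp Cm : Finset E) : Prop :=
  Disjoint Cp Cm ∧ (Cp ∪ Cm).Nonempty ∧ IsCirculation t h (chiVec Cp Cm) ∧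
    ∀ φ : E → ℝ, IsCirculation t h φ → φ ≠ 0 →
      (∀ f, φ f ≠ 0 → f ∈ Cp ∪ Cm) → ∀ f ∈ Cp ∪ Cm, φ f ≠ 0

/-- A circuit signature: a choice, for each cycle, of exactly one of its two
orientations. -/
def IsCircuitSignature [Fintype E] [DecidableEq E] [DecidableEq V] (t h : E → V)
    (σ : Set (Finset E × Finset E)) : Prop :=
  (∀ q ∈ σ, IsSignedCycle t h q.1 q.2) ∧
    ∀ Cp Cm : Finset E, IsSignedCycle t h Cp Cm → ((Cp, Cm) ∈ σ ↔ (Cm, Cp) ∉ σ)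

/-- Acyclicity of a circuit signature: no nontrivial nonnegative combination of the
vectors of the chosen signed cycles vanishes. -/
def IsAcyclicSig [DecidableEq E] (σ : Set (Finset E × Finset E)) : Prop :=
  ∀ (s : Finset (Finset E × Finset E)) (a : Finset E × Finset E → ℝ),
    ↑s ⊆ σ → (∀ q, 0 ≤ a q) → (∃ q ∈ s, a q ≠ 0) →
      ∑ q ∈ s, a q • chiVec q.1 q.2 ≠ 0

/-- A weight function is generic if the two arcs of every cycle have different
total weights. -/
def GenericWeight [Fintype E] [DecidableEq E] [DecidableEq V] (t h : E → V)
    (w : E → ℝ) : Prop :=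
  ∀ Cp Cm : Finset E, IsSignedCycle t h Cp Cm → ∑ f ∈ Cp, w f ≠ ∑ f ∈ Cm, w f

/-- The circuit signature `cir^w`: orient each cycle so that the positive arc has
the larger total `w`-weight. -/
def cirw [Fintype E] [DecidableEq E] [DecidableEq V] (t h : E → V) (w : E → ℝ) :
    Set (Finset E × Finset E) :=
  {q | IsSignedCycle t h q.1 q.2 ∧ ∑ f ∈ q.2, w f < ∑ f ∈ q.1, w f}

/-- `tree(D,σ)`: spanning trees `T` such that every non-tree edge `f` lies in the
positive arc of the (σ-oriented) fundamental cycle of `f`, i.e. of the unique cycle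
contained in `T ∪ {f}`. -/
def treeSet [Fintype V] [Fintype E] [DecidableEq V] [DecidableEq E] (t h : E → V)
    (σ : Set (Finset E × Finset E)) : Set (Finset E) :=
  {T | IsSpanningTree t h T ∧
    ∀ f ∉ T, ∀ Cp Cm : Finset E, (Cp, Cm) ∈ σ → Cp ∪ Cm ⊆ insert f T → f ∈ Cp}

/-- `F` is a face of `Q`: the locus where some linear functional bounded above on `Q`
attains its maximum. -/
def IsFaceOf (Q F : Set (ι → ℝ)) : Prop :=
  ∃ (l : (ι → ℝ) →ₗ[ℝ] ℝ) (c : ℝ), (∀ y ∈ Q, l y ≤ c) ∧ F = {y ∈ Q | l y = c}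

/-- `F` is a facet of `Q`: a face of codimension one. -/
def IsFacetOf (Q F : Set (ι → ℝ)) : Prop :=
  IsFaceOf Q F ∧ pdim F + 1 = pdim Q

end

section Contraction

variable {V E : Type*} [Fintype V] [Fintype E] [DecidableEq V] [DecidableEq E]

/-- The vertex identification map of the contraction `D/e`: for a non-loop `e` the
head of `e` is merged into the tail of `e`; contracting a loop does nothing. -/
def cmap' (t h : E → V) (e : E) : V → V :=
  fun v => if t e ≠ h e ∧ v = h e then t e else v

/-!
A generic cost `w` triangulates the polytope `conv ({0} ∪ {x_f})`: the cheapest way to write a point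
of its cone as a nonnegative combination of the `x_f` is supported on a basis that is optimal in the
sense of linear programming. Translating by a generic vector `u` makes the triangulation a
half-open decomposition. All its simplices are unimodular, and one on whose basis
`u` has `s` negative coordinates contributes `X ^ s / (1 - X) ^ (d + 1)` to the Ehrhart series.
Hence the `i`-th coefficient of the `h^*`-polynomial is the number of optimal bases on which `u` has
`i` negative coordinates.

If `w` is small at `e` and `u` is dominated by `x_e`, then `T ↦ T ∪ {e}` injects the optimal bases
of the contraction into those of the original configuration and preserves the number of negative
coordinates.
-/

section ConfigBasis

open Submodule

variable {K ι W : Type*} [Field K] [AddCommGroup W] [Module K W] {x : ι → W} {T : Finset ι}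

/-- `T` indexes a basis of the span of the vector configuration `x`. For the configuration of edge
vectors of a connected digraph these are the spanning trees. -/
def IsConfigBasis (K : Type*) {ι W : Type*} [Field K] [AddCommGroup W] [Module K W] (x : ι → W)
    (T : Finset ι) : Prop :=
  LinearIndepOn K x ↑T ∧ ∀ f, x f ∈ span K (x '' ↑T)

theorem IsConfigBasis.span_eq (hT : IsConfigBasis K x T) :
    span K (x '' ↑T) = span K (Set.range x) :=
  le_antisymm (span_mono (Set.image_subset_range x ↑T))
    (span_le.2 (Set.range_subset_iff.2 hT.2))

theorem IsConfigBasis.card_eq_finrank (hT : IsConfigBasis K x T) :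
    T.card = Module.finrank K (span K (Set.range x)) := by
  have hcard := finrank_span_eq_card hT.1
  rw [← Set.image_eq_range, hT.span_eq] at hcard
  simpa using hcard.symm

theorem exists_isConfigBasis_mem_span_inter [Finite ι] (x : ι → W) (S : Set ι) :
    ∃ T : Finset ι, IsConfigBasis K x T ∧ ∀ f ∈ S, x f ∈ span K (x '' (↑T ∩ S)) := by
  obtain ⟨B, hBS, -, hSB, hB⟩ :=
    exists_linearIndepOn_extension (linearIndepOn_empty K x) (Set.empty_subset S)
  obtain ⟨T, -, hBT, hT, hTind⟩ := exists_linearIndepOn_extension hB (Set.subset_univ B)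
  lift T to Finset ι using T.toFinite
  exact ⟨T, ⟨hTind, fun f => hT ⟨f, trivial, rfl⟩⟩,
    fun f hf => span_mono (Set.image_mono (Set.subset_inter hBT hBS)) (hSB ⟨f, hf, rfl⟩)⟩

variable [Fintype ι]

theorem exists_coordOn (K : Type*) {ι W : Type*} [Field K] [AddCommGroup W] [Module K W]
    [Fintype ι] (x : ι → W) (T : Finset ι) :
    ∃ φ : W →ₗ[K] ι → K, (∀ z, ∀ f ∉ T, φ z f = 0) ∧
      ∀ z ∈ span K (x '' ↑T), ∑ f, φ z f • x f = z := by
  classical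
  set mask : (ι → K) →ₗ[K] ι → K := LinearMap.pi fun f => if f ∈ T then LinearMap.proj f else 0
  set F : (ι → K) →ₗ[K] W := Fintype.linearCombination K x ∘ₗ mask
  obtain ⟨s, hs⟩ := F.rangeRestrict.exists_rightInverse_of_surjective F.range_rangeRestrict
  obtain ⟨s', hs'⟩ := s.exists_extend
  have hspan : span K (x '' ↑T) ≤ F.range := by
    rw [span_le]
    rintro _ ⟨f, hf, rfl⟩
    refine ⟨Pi.single f 1, ?_⟩
    have hmask : mask (Pi.single f 1) = Pi.single f 1 := by
      ext g
      by_cases hg : g ∈ T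
      · simp [mask, hg]
      · simp [mask, hg, ne_of_mem_of_not_mem hf hg]
    simp [F, hmask, Fintype.linearCombination_apply_single]
  refine ⟨mask ∘ₗ s', fun z f hf => by simp [mask, hf], fun z hz => ?_⟩
  have hsz := congrArg Subtype.val (LinearMap.congr_fun hs ⟨z, hspan hz⟩)
  rwa [← hs'] at hsz

/-- The coordinate map of the subfamily `x|_T`: on the span of `x|_T` it returns coefficients of a
linear combination of `x|_T`, indexed by all of `ι` and zero off `T`. Its values outside that span
are arbitrary, which lets it be linear on the whole space. -/
noncomputable def coordOn (K : Type*) {ι W : Type*} [Field K] [AddCommGroup W] [Module K W]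
    [Fintype ι] (x : ι → W) (T : Finset ι) : W →ₗ[K] ι → K :=
  (exists_coordOn K x T).choose

theorem coordOn_of_notMem (z : W) {f : ι} (hf : f ∉ T) : coordOn K x T z f = 0 :=
  (exists_coordOn K x T).choose_spec.1 z f hf

theorem sum_coordOn_smul {z : W} (hz : z ∈ span K (x '' ↑T)) :
    ∑ f, coordOn K x T z f • x f = z :=
  (exists_coordOn K x T).choose_spec.2 z hz

theorem sum_smul_mem_span_image {S : Set ι} {c : ι → K} (hc : ∀ f ∉ S, c f = 0) :
    ∑ f, c f • x f ∈ span K (x '' S) := by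
  refine sum_mem fun f _ => ?_
  by_cases hf : f ∈ S
  · exact smul_mem _ _ (subset_span ⟨f, hf, rfl⟩)
  · simp [hc f hf]

theorem eq_coordOn_of_sum_smul_eq (hT : LinearIndepOn K x ↑T) {c : ι → K} (hc : ∀ f ∉ T, c f = 0)
    {z : W} (hz : ∑ f, c f • x f = z) : c = coordOn K x T z := by
  have hmem : z ∈ span K (x '' ↑T) := hz ▸ sum_smul_mem_span_image hc
  have hoff : ∀ f ∉ T, c f - coordOn K x T z f = 0 := fun f hf => by
    rw [hc f hf, coordOn_of_notMem z hf, sub_zero]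
  have hsum : ∑ f ∈ T, (c f - coordOn K x T z f) • x f = 0 := by
    rw [sum_subset (subset_univ T) fun f _ hf => by rw [hoff f hf, zero_smul]]
    simp only [sub_smul, sum_sub_distrib, hz, sum_coordOn_smul hmem, sub_self]
  ext f
  by_cases hf : f ∈ T
  · exact sub_eq_zero.1 (linearIndepOn_finset_iff.1 hT _ hsum f hf)
  · exact sub_eq_zero.1 (hoff f hf)

theorem coordOn_self [DecidableEq ι] (hT : LinearIndepOn K x ↑T) {f : ι} (hf : f ∈ T) :
    coordOn K x T (x f) = Pi.single f 1 :=
  (eq_coordOn_of_sum_smul_eq hT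
    (fun g hg => Pi.single_eq_of_ne (ne_of_mem_of_not_mem hf hg).symm 1)
    (by simp [Pi.single_apply])).symm

theorem coordOn_eq_zero_of_mem_span_inter (hT : LinearIndepOn K x ↑T) {S : Set ι} {z : W}
    (hz : z ∈ span K (x '' (↑T ∩ S))) {f : ι} (hf : f ∉ S) : coordOn K x T z f = 0 := by
  classical
  have hker : span K (x '' (↑T ∩ S)) ≤ LinearMap.ker (LinearMap.proj f ∘ₗ coordOn K x T) := by
    rw [span_le]
    rintro _ ⟨g, ⟨hgT, hgS⟩, rfl⟩
    have hfg : f ≠ g := (ne_of_mem_of_not_mem hgS hf).symm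
    simp [coordOn_self hT hgT, hfg]
  exact hker hz

protected theorem IsConfigBasis.sum_coordOn_smul (hT : IsConfigBasis K x T) {z : W}
    (hz : z ∈ span K (Set.range x)) : ∑ f, coordOn K x T z f • x f = z :=
  sum_coordOn_smul (hT.span_eq ▸ hz)

theorem coordOn_sum_smul (c : ι → K) (g : ι) :
    coordOn K x T (∑ f, c f • x f) g = ∑ f, c f * coordOn K x T (x f) g := by
  simp only [map_sum, map_smul, Finset.sum_apply, Pi.smul_apply, smul_eq_mul]

variable [DecidableEq ι]

theorem IsConfigBasis.exchange (hT : IsConfigBasis K x T) {f g : ι} (hg : g ∈ T)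
    (hfg : coordOn K x T (x f) g ≠ 0) : IsConfigBasis K x (insert f (T.erase g)) := by
  have hf : x f ∉ span K (x '' ↑(T.erase g)) := fun hmem => hfg <|
    coordOn_eq_zero_of_mem_span_inter hT.1 (S := {g}ᶜ) (by
      rwa [coe_erase, Set.sdiff_eq] at hmem) (by simp)
  refine ⟨?_, ?_⟩
  · rw [coe_insert]
    exact (hT.1.mono (coe_subset.2 (erase_subset g T))).insert hf
  · have hgspan : x g ∈ span K (x '' ↑(insert f (T.erase g))) := by
      rw [coe_insert, Set.image_insert_eq]
      refine mem_span_insert_exchange ?_ hf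
      rw [← Set.image_insert_eq, ← coe_insert, insert_erase hg]
      exact hT.2 f
    have hle : span K (x '' ↑T) ≤ span K (x '' ↑(insert f (T.erase g))) := by
      rw [span_le]
      rintro _ ⟨k, hk, rfl⟩
      obtain rfl | hkg := eq_or_ne k g
      · exact hgspan
      · exact subset_span ⟨k, by simp [hkg, mem_coe.1 hk], rfl⟩
    exact fun k => hle (hT.2 k)

theorem IsConfigBasis.coordOn_mul_coordOn_exchange (hT : IsConfigBasis K x T) {f g : ι}
    (hg : g ∈ T) (hfg : coordOn K x T (x f) g ≠ 0) :
    coordOn K x T (x f) g * coordOn K x (insert f (T.erase g)) (x g) f = 1 := by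
  have hsum := congrArg (coordOn K x T · g)
    (sum_coordOn_smul ((hT.exchange hg hfg).2 g))
  simp only [coordOn_sum_smul, coordOn_self hT.1 hg, Pi.single_eq_same] at hsum
  rw [← hsum, mul_comm, eq_comm]
  refine sum_eq_single f (fun k _ hk => ?_) (by simp)
  by_cases hkT : k ∈ T.erase g
  · obtain ⟨hkg, hkT⟩ := mem_erase.1 hkT
    rw [coordOn_self hT.1 hkT, Pi.single_eq_of_ne hkg.symm, mul_zero]
  · rw [coordOn_of_notMem _ (by simp [hk, hkT]), zero_mul]

end ConfigBasis

section LinearProgramming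

variable {ι W : Type*} [Fintype ι] [AddCommGroup W] [Module ℝ W] {x : ι → W} {w : ι → ℝ}
  {S T : Finset ι}

/-- The reduced cost of `f` with respect to the basis `T` in the linear program "write a given
vector as `∑ c f • x f` with `c ≥ 0`, minimizing `∑ c f * w f`". -/
noncomputable def reducedCost (x : ι → W) (w : ι → ℝ) (T : Finset ι) (f : ι) : ℝ :=
  w f - ∑ g, coordOn ℝ x T (x f) g * w g

/-- A basis whose reduced costs are all nonnegative. These bases index the maximal cells of the
regular triangulation of the cone over `x` induced by the heights `w`. -/
structure IsOptimalBasis (x : ι → W) (w : ι → ℝ) (T : Finset ι) : Prop where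
  isConfigBasis : IsConfigBasis ℝ x T
  reducedCost_nonneg : ∀ f, 0 ≤ reducedCost x w T f

/-- No relation among `x` with a single vector outside a basis is balanced by `w`. -/
def IsGenericCost (x : ι → W) (w : ι → ℝ) : Prop :=
  ∀ T, IsConfigBasis ℝ x T → ∀ f ∉ T, reducedCost x w T f ≠ 0

/-- `φ` is an optimal solution of the linear program "write `∑ f, φ f • x f` as a nonnegative
combination of `x` at minimal cost `w`". -/
structure IsMinCost (x : ι → W) (w φ : ι → ℝ) : Prop where
  nonneg : 0 ≤ φ
  le_cost : ∀ c : ι → ℝ, 0 ≤ c → ∑ f, c f • x f = ∑ f, φ f • x f → ∑ f, φ f * w f ≤ ∑ f, c f * w f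

theorem sum_mul_eq_sum_coordOn_add_sum_reducedCost (x : ι → W) (w : ι → ℝ) (T : Finset ι)
    (c : ι → ℝ) :
    ∑ f, c f * w f = ∑ g, coordOn ℝ x T (∑ f, c f • x f) g * w g +
      ∑ f, c f * reducedCost x w T f := by
  have hswap : ∑ g, coordOn ℝ x T (∑ f, c f • x f) g * w g =
      ∑ f, c f * ∑ g, coordOn ℝ x T (x f) g * w g := by
    simp only [coordOn_sum_smul, sum_mul, mul_sum, mul_assoc]
    exact sum_comm
  simp only [hswap, reducedCost, mul_sub, sum_sub_distrib, add_sub_cancel]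

theorem IsOptimalBasis.mem_of_cost_le (hw : IsGenericCost x w) (hT : IsOptimalBasis x w T)
    {c : ι → ℝ} (hc : 0 ≤ c)
    (hle : ∑ f, c f * w f ≤ ∑ g, coordOn ℝ x T (∑ f, c f • x f) g * w g) {f : ι}
    (hf : c f ≠ 0) : f ∈ T := by
  have hterm : ∀ g ∈ univ, 0 ≤ c g * reducedCost x w T g :=
    fun g _ => mul_nonneg (hc g) (hT.reducedCost_nonneg g)
  have hsum : ∑ g, c g * reducedCost x w T g = 0 := by
    refine le_antisymm ?_ (sum_nonneg hterm)
    linarith [sum_mul_eq_sum_coordOn_add_sum_reducedCost x w T c]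
  have hzero := (sum_eq_zero_iff_of_nonneg hterm).1 hsum f (mem_univ f)
  by_contra hfT
  exact mul_ne_zero hf (hw T hT.isConfigBasis f hfT) hzero

theorem coordOn_nonneg_of_forall_pos {z : W} (h : ∀ f ∈ T, 0 < coordOn ℝ x T z f) :
    0 ≤ coordOn ℝ x T z := fun f => by
  by_cases hf : f ∈ T
  · exact (h f hf).le
  · exact (coordOn_of_notMem z hf).ge

theorem IsOptimalBasis.unique (hw : IsGenericCost x w) (hS : IsOptimalBasis x w S)
    (hT : IsOptimalBasis x w T) {z : W} (hz : z ∈ Submodule.span ℝ (Set.range x))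
    (hzS : ∀ f ∈ S, 0 < coordOn ℝ x S z f) (hzT : ∀ f ∈ T, 0 < coordOn ℝ x T z f) : S = T := by
  wlog hle : ∑ f, coordOn ℝ x S z f * w f ≤ ∑ f, coordOn ℝ x T z f * w f generalizing S T
  · exact (this hT hS hzT hzS (le_of_not_ge hle)).symm
  refine eq_of_subset_of_card_le (fun f hf => ?_) ?_
  · refine hT.mem_of_cost_le hw (coordOn_nonneg_of_forall_pos hzS) ?_ (hzS f hf).ne'
    rwa [hS.isConfigBasis.sum_coordOn_smul hz]
  · rw [hS.isConfigBasis.card_eq_finrank, hT.isConfigBasis.card_eq_finrank]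

theorem exists_isMinCost (x : ι → W) (hw : ∀ f, 0 < w f) {α : ι → ℝ} (hα : 0 ≤ α) :
    ∃ φ, IsMinCost x w φ ∧ ∑ f, φ f • x f = ∑ f, α f • x f := by
  set cost : (ι → ℝ) → ℝ := fun φ => ∑ f, φ f * w f
  have hcont : Continuous cost := by fun_prop
  set A := Fintype.linearCombination ℝ x
  set feasible : Set (ι → ℝ) := {φ | 0 ≤ φ ∧ φ - α ∈ LinearMap.ker A ∧ cost φ ≤ cost α}
  have hmem : ∀ {φ}, φ - α ∈ LinearMap.ker A ↔ ∑ f, φ f • x f = ∑ f, α f • x f := fun {φ} => by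
    rw [LinearMap.mem_ker, map_sub, sub_eq_zero]; rfl
  have hclosed : IsClosed feasible := by
    refine (isClosed_le continuous_const continuous_id).inter (IsClosed.inter ?_ ?_)
    · exact (Submodule.closed_of_finiteDimensional _).preimage (continuous_id.sub continuous_const)
    · exact isClosed_le hcont continuous_const
  have hbounded : feasible ⊆ Set.Icc 0 fun f => cost α / w f := by
    rintro φ ⟨hφ, -, hle⟩
    refine ⟨hφ, fun f => (le_div_iff₀ (hw f)).2 (le_trans ?_ hle)⟩
    exact single_le_sum (f := fun g => φ g * w g)
      (fun g _ => mul_nonneg (hφ g) (hw g).le) (mem_univ f)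
  have hcompact : IsCompact feasible := isCompact_Icc.of_isClosed_subset hclosed hbounded
  obtain ⟨φ, ⟨hφ, hφα, hφle⟩, hmin⟩ :=
    hcompact.exists_isMinOn ⟨α, hα, by simp, le_rfl⟩ hcont.continuousOn
  refine ⟨φ, ⟨hφ, fun c hc hcφ => ?_⟩, hmem.1 hφα⟩
  obtain hle | hle := le_total (cost c) (cost α)
  · exact hmin ⟨hc, hmem.2 (hcφ.trans (hmem.1 hφα)), hle⟩
  · exact hφle.trans hle

theorem IsMinCost.sum_mul_nonneg {φ d : ι → ℝ} (hφ : IsMinCost x w φ)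
    (hd : ∑ f, d f • x f = 0) (hdφ : ∀ f, φ f = 0 → 0 ≤ d f) : 0 ≤ ∑ f, d f * w f := by
  have hsmall : ∀ᶠ s : ℝ in nhdsWithin 0 (Set.Ioi 0), ∀ f, 0 ≤ φ f + s * d f := by
    refine Filter.eventually_all.2 fun f => ?_
    obtain hf | hf := (hφ.nonneg f).eq_or_lt'
    · filter_upwards [self_mem_nhdsWithin] with s hs
      rw [show φ f = 0 from hf, zero_add]
      exact mul_nonneg (Set.mem_Ioi.1 hs).le (hdφ f hf)
    · have hcont : Continuous fun s : ℝ => φ f + s * d f := by fun_prop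
      have hpos : 0 < φ f + 0 * d f := by simpa using hf
      exact nhdsWithin_le_nhds ((hcont.tendsto 0).eventually_const_le hpos)
  obtain ⟨s, hs, hspos⟩ := (hsmall.and self_mem_nhdsWithin).exists
  have hle := hφ.le_cost (fun f => φ f + s * d f) hs (by
    simp only [add_smul, mul_smul, sum_add_distrib, ← smul_sum, hd, smul_zero, add_zero])
  simp only [add_mul, mul_assoc, sum_add_distrib, ← mul_sum] at hle
  exact nonneg_of_mul_nonneg_right (by linarith) (Set.mem_Ioi.1 hspos)

theorem sum_single_sub_coordOn_smul [DecidableEq ι] (hT : IsConfigBasis ℝ x T) (f : ι) :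
    ∑ g, (Pi.single f 1 - coordOn ℝ x T (x f) : ι → ℝ) g • x g = 0 := by
  simp [sub_smul, Pi.single_apply, sum_coordOn_smul (hT.2 f)]

theorem sum_single_sub_coordOn_mul [DecidableEq ι] (x : ι → W) (w : ι → ℝ) (T : Finset ι)
    (f : ι) :
    ∑ g, (Pi.single f 1 - coordOn ℝ x T (x f) : ι → ℝ) g * w g = reducedCost x w T f := by
  simp [sub_mul, Pi.single_apply, reducedCost]

theorem IsMinCost.reducedCost_nonneg {φ : ι → ℝ} (hφ : IsMinCost x w φ)
    (hT : IsConfigBasis ℝ x T) {f : ι} (hf : ∀ g, φ g = 0 → coordOn ℝ x T (x f) g ≤ 0) :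
    0 ≤ reducedCost x w T f := by
  classical
  have hsingle : (0 : ι → ℝ) ≤ Pi.single f 1 := Pi.single_nonneg.2 zero_le_one
  rw [← sum_single_sub_coordOn_mul]
  refine hφ.sum_mul_nonneg (sum_single_sub_coordOn_smul hT f) fun g hg => ?_
  exact sub_nonneg.2 ((hf g hg).trans (hsingle g))

theorem IsMinCost.reducedCost_nonpos {φ : ι → ℝ} (hφ : IsMinCost x w φ)
    (hT : IsConfigBasis ℝ x T) {f : ι} (hφf : φ f ≠ 0)
    (hf : ∀ g, φ g = 0 → 0 ≤ coordOn ℝ x T (x f) g) : reducedCost x w T f ≤ 0 := by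
  classical
  rw [← sum_single_sub_coordOn_mul, ← neg_nonneg, ← sum_neg_distrib]
  simp only [← neg_mul]
  refine hφ.sum_mul_nonneg (d := fun g => -_) ?_ fun g hg => ?_
  · simp only [neg_smul, sum_neg_distrib, sum_single_sub_coordOn_smul hT f, neg_zero]
  · have hgf : g ≠ f := fun h => hφf (h ▸ hg)
    simpa [hgf] using hf g hg

theorem IsMinCost.exists_isConfigBasis {φ : ι → ℝ} (hφ : IsMinCost x w φ)
    (hw : IsGenericCost x w) : ∃ T, IsConfigBasis ℝ x T ∧ ∀ f ∉ T, φ f = 0 := by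
  obtain ⟨T, hT, hspan⟩ := exists_isConfigBasis_mem_span_inter (K := ℝ) x {f | φ f ≠ 0}
  refine ⟨T, hT, fun f hfT => ?_⟩
  by_contra hf
  have hcoord : ∀ g, φ g = 0 → coordOn ℝ x T (x f) g = 0 := fun g hg =>
    coordOn_eq_zero_of_mem_span_inter hT.1 (hspan f hf) (by simpa using hg)
  exact hw T hT f hfT <| le_antisymm
    (hφ.reducedCost_nonpos hT hf fun g hg => (hcoord g hg).ge)
    (hφ.reducedCost_nonneg hT fun g hg => (hcoord g hg).le)

theorem exists_isOptimalBasis (hpos : ∀ f, 0 < w f) (hw : IsGenericCost x w) {α : ι → ℝ}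
    (hα : 0 ≤ α)
    (hgen : ∀ T, IsConfigBasis ℝ x T → ∀ f ∈ T, coordOn ℝ x T (∑ f, α f • x f) f ≠ 0) :
    ∃ T, IsOptimalBasis x w T ∧ ∀ f ∈ T, 0 < coordOn ℝ x T (∑ f, α f • x f) f := by
  obtain ⟨φ, hφ, hφα⟩ := exists_isMinCost x hpos hα
  obtain ⟨T, hT, hφT⟩ := hφ.exists_isConfigBasis hw
  have hcoord : φ = coordOn ℝ x T (∑ f, α f • x f) := eq_coordOn_of_sum_smul_eq hT.1 hφT hφα
  have hφpos : ∀ f ∈ T, 0 < φ f := fun f hf =>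
    (hφ.nonneg f).lt_of_ne' (hcoord ▸ hgen T hT f hf)
  refine ⟨T, ⟨hT, fun f => hφ.reducedCost_nonneg hT fun g hg => ?_⟩, hcoord ▸ hφpos⟩
  exact (coordOn_of_notMem _ fun hgT => (hφpos g hgT).ne' hg).le

end LinearProgramming

section Unimodular

variable {ι W : Type*} [Fintype ι] [AddCommGroup W] [Module ℝ W] {L : AddSubgroup W} {x : ι → W}
  {T : Finset ι}

/-- A vector configuration is unimodular with respect to the lattice `L` when each of its bases
generates the part of `L` in the span of the configuration. -/
structure IsUnimodularConfig (L : AddSubgroup W) (x : ι → W) : Prop where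
  mem : ∀ f, x f ∈ L
  exists_int_eq_coordOn : ∀ T, IsConfigBasis ℝ x T → ∀ z ∈ L,
    z ∈ Submodule.span ℝ (Set.range x) → ∀ f, ∃ n : ℤ, (n : ℝ) = coordOn ℝ x T z f

theorem IsUnimodularConfig.exists_int_eq_coordOn_self (hx : IsUnimodularConfig L x)
    (hT : IsConfigBasis ℝ x T) (f g : ι) : ∃ n : ℤ, (n : ℝ) = coordOn ℝ x T (x f) g :=
  hx.exists_int_eq_coordOn T hT (x f) (hx.mem f) (Submodule.subset_span ⟨f, rfl⟩) g

theorem IsUnimodularConfig.abs_coordOn_le_one (hx : IsUnimodularConfig L x)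
    (hT : IsConfigBasis ℝ x T) (f g : ι) : |coordOn ℝ x T (x f) g| ≤ 1 := by
  classical
  obtain hfg | hfg := eq_or_ne (coordOn ℝ x T (x f) g) 0
  · simp [hfg]
  have hg : g ∈ T := by
    by_contra hg
    exact hfg (coordOn_of_notMem _ hg)
  obtain ⟨m, hm⟩ := hx.exists_int_eq_coordOn_self hT f g
  obtain ⟨n, hn⟩ := hx.exists_int_eq_coordOn_self (hT.exchange hg hfg) g f
  have hmn : m * n = 1 := by
    have := hT.coordOn_mul_coordOn_exchange hg hfg
    rw [← hm, ← hn] at this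
    exact_mod_cast this
  rw [← hm]
  exact_mod_cast (Int.isUnit_iff_abs_eq.1 (IsUnit.of_mul_eq_one n hmn)).le

end Unimodular

section ZeroHull

variable {ι W : Type*} [AddCommGroup W] [Module ℝ W]

/-- The polytope spanned by the origin and the vectors of the configuration `x`. For the edge
vectors of a digraph this is the extended root polytope. -/
def zeroHull (x : ι → W) : Set W := convexHull ℝ ({0} ∪ Set.range x)

theorem pdim_zeroHull {κ : Type*} (x : ι → κ → ℝ) :
    pdim (zeroHull x) = Module.finrank ℝ (Submodule.span ℝ (Set.range x)) := by
  have hspan : vectorSpan ℝ (zeroHull x) = Submodule.span ℝ (Set.range x) := by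
    rw [zeroHull, ← direction_affineSpan, affineSpan_convexHull, direction_affineSpan,
      vectorSpan_eq_span_vsub_set_right ℝ (p := 0) (by simp)]
    simp
  rw [pdim, hspan]

theorem zeroHull_subtype_ne {x : ι → W} {i : ι} (hi : x i = 0) :
    zeroHull (fun j : {j // j ≠ i} => x j) = zeroHull x := by
  rw [zeroHull, zeroHull]
  congr 1
  ext z
  refine or_congr_right' fun hz => ⟨fun ⟨j, hj⟩ => ⟨j, hj⟩, fun ⟨j, hj⟩ => ⟨⟨j, ?_⟩, hj⟩⟩
  rintro rfl
  exact hz (hj ▸ hi)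

variable [Fintype ι]

theorem mem_zeroHull {x : ι → W} {z : W} :
    z ∈ zeroHull x ↔ ∃ α : ι → ℝ, 0 ≤ α ∧ ∑ f, α f ≤ 1 ∧ ∑ f, α f • x f = z := by
  classical
  constructor
  · set A := Fintype.linearCombination ℝ x
    have hconvex : Convex ℝ {α : ι → ℝ | 0 ≤ α ∧ ∑ f, α f ≤ 1} :=
      (convex_Ici 0).inter (convex_halfSpace_le (𝕜 := ℝ) (f := fun α : ι → ℝ => ∑ f, α f)
        ⟨fun α β => sum_add_distrib, fun r α => (mul_sum univ α r).symm⟩ 1)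
    have hsub : zeroHull x ⊆ A '' {α : ι → ℝ | 0 ≤ α ∧ ∑ f, α f ≤ 1} := by
      refine convexHull_min ?_ (hconvex.linear_image A)
      rintro _ (rfl | ⟨f, rfl⟩)
      · exact ⟨0, by simp, map_zero A⟩
      · exact ⟨Pi.single f 1, by simp, by simp [A, Fintype.linearCombination_apply_single]⟩
    intro hz
    obtain ⟨α, ⟨hα, hsum⟩, rfl⟩ := hsub hz
    exact ⟨α, hα, hsum, rfl⟩
  · rintro ⟨α, hα, hsum, rfl⟩
    refine mem_convexHull_of_exists_fintype (fun o : Option ι => o.elim (1 - ∑ f, α f) α)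
      (fun o => o.elim 0 x) ?_ ?_ ?_ ?_
    · rintro (_ | f)
      exacts [sub_nonneg.2 hsum, hα f]
    · simp [Fintype.sum_option]
    · rintro (_ | f) <;> simp
    · simp [Fintype.sum_option]

theorem mem_smul_zeroHull {x : ι → W} {z : W} {r : ℝ} (hr : 0 ≤ r) :
    z ∈ r • zeroHull x ↔ ∃ α : ι → ℝ, 0 ≤ α ∧ ∑ f, α f ≤ r ∧ ∑ f, α f • x f = z := by
  constructor
  · rintro ⟨y, hy, rfl⟩
    obtain ⟨α, hα, hsum, rfl⟩ := mem_zeroHull.1 hy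
    refine ⟨r • α, smul_nonneg hr hα, ?_, by simp [smul_sum, mul_smul]⟩
    simpa [← mul_sum] using mul_le_mul_of_nonneg_left hsum hr
  · rintro ⟨α, hα, hsum, rfl⟩
    obtain rfl | hr := hr.eq_or_lt
    · have hα0 : α = 0 := funext fun f =>
        (sum_eq_zero_iff_of_nonneg fun f _ => hα f).1
          (le_antisymm hsum (sum_nonneg fun f _ => hα f)) f (mem_univ f)
      exact ⟨0, mem_zeroHull.2 ⟨0, by simp⟩, by simp [hα0]⟩
    · rw [Set.mem_smul_set_iff_inv_smul_mem₀ hr.ne', mem_zeroHull]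
      refine ⟨r⁻¹ • α, smul_nonneg (inv_nonneg.2 hr.le) hα, ?_, by simp [smul_sum, mul_smul]⟩
      simpa [← mul_sum] using (inv_mul_le_one₀ hr).2 hsum

end ZeroHull

section NatSimplex

variable {ι : Type*} [DecidableEq ι] {T : Finset ι} {m : ℕ} {b : ι →₀ ℕ}

theorem pairwiseDisjoint_finsuppAntidiag (T : Finset ι) (s : Set ℕ) :
    s.PairwiseDisjoint (finsuppAntidiag T) := fun _ _ _ _ hij =>
  disjoint_left.2 fun _ hi hj =>
    hij ((mem_finsuppAntidiag.1 hi).1.symm.trans (mem_finsuppAntidiag.1 hj).1)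

/-- The families of natural numbers indexed by `T` (and extended by zero) with sum less than `m`.
The strict bound makes the set empty, as needed, for a negative bound truncated to `m = 0`. -/
def natSimplex (T : Finset ι) (m : ℕ) : Finset (ι →₀ ℕ) :=
  (range m).disjiUnion (finsuppAntidiag T) (pairwiseDisjoint_finsuppAntidiag T _)

theorem mem_natSimplex : b ∈ natSimplex T m ↔ b.support ⊆ T ∧ ∑ f ∈ T, b f < m := by
  simp [natSimplex, and_comm]

theorem card_natSimplex_succ (T : Finset ι) (m : ℕ) :
    #(natSimplex T (m + 1)) = (#T + m).choose #T := by
  simp only [natSimplex, card_disjiUnion, card_finsuppAntidiag_nat_eq_multichoose,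
    Nat.sum_range_multichoose, add_comm]

theorem mk_card_natSimplex_mul_one_sub_X_pow (T : Finset ι) (s : ℕ) :
    PowerSeries.mk (fun k => (#(natSimplex T (k + 1 - s)) : ℤ)) *
      (1 - PowerSeries.X) ^ (#T + 1) = PowerSeries.X ^ s := by
  have hmk : PowerSeries.mk (fun k => (#(natSimplex T (k + 1 - s)) : ℤ)) =
      PowerSeries.X ^ s * PowerSeries.mk fun n => ((#T + n).choose #T : ℤ) := by
    ext k
    rw [PowerSeries.coeff_X_pow_mul', PowerSeries.coeff_mk, PowerSeries.coeff_mk]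
    split_ifs with hs
    · rw [Nat.sub_add_comm hs, card_natSimplex_succ]
    · rw [Nat.sub_eq_zero_of_le (by omega)]
      simp [natSimplex]
  rw [hmk, mul_assoc, PowerSeries.mk_add_choose_mul_one_sub_pow_eq_one, mul_one]

end NatSimplex

section LatticePointCount

variable {ι W : Type*} [Fintype ι] [AddCommGroup W] [Module ℝ W] {L : AddSubgroup W} {x : ι → W}
  {w : ι → ℝ} {u z : W} {S T : Finset ι} {b : ι →₀ ℕ} {k : ℕ}

/-- A cost for which the simplices `conv ({0} ∪ x|_T)`, with `T` an optimal basis, triangulate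
`zeroHull x`. The bound on the coordinate sums says that such a simplex is cut out of its cone by
the polytope. -/
structure IsTriangulatingCost (x : ι → W) (w : ι → ℝ) : Prop where
  pos : ∀ f, 0 < w f
  isGenericCost : IsGenericCost x w
  sum_coordOn_le_one : ∀ T, IsOptimalBasis x w T → ∀ f, ∑ g, coordOn ℝ x T (x f) g ≤ 1

/-- A small vector of the cone over `x` in general position with respect to all bases. Translating
a simplicial cone by it makes the cone half-open. -/
structure IsGenericShift (x : ι → W) (u : W) : Prop where
  exists_eq_sum_smul : ∃ β : ι → ℝ, 0 ≤ β ∧ ∑ f, β f • x f = u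
  coordOn_ne_zero : ∀ T, IsConfigBasis ℝ x T → ∀ f ∈ T, coordOn ℝ x T u f ≠ 0
  abs_coordOn_lt_one : ∀ T, IsConfigBasis ℝ x T → ∀ f, |coordOn ℝ x T u f| < 1

/-- The elements of the basis `T` opposite to the facets removed from its half-open simplex. -/
noncomputable def negIndices (x : ι → W) (u : W) (T : Finset ι) : Finset ι :=
  univ.filter fun f => coordOn ℝ x T u f < 0

open Classical in
/-- The cells of the triangulation of `zeroHull x` given by the cost `w`. -/
noncomputable def optimalBases (x : ι → W) (w : ι → ℝ) : Finset (Finset ι) :=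
  univ.filter (IsOptimalBasis x w)

theorem mem_optimalBases : T ∈ optimalBases x w ↔ IsOptimalBasis x w T := by
  simp [optimalBases]

theorem sum_smul_mem_span_range (c : ι → ℝ) :
    ∑ f, c f • x f ∈ Submodule.span ℝ (Set.range x) :=
  sum_mem fun f _ => Submodule.smul_mem _ _ (Submodule.subset_span ⟨f, rfl⟩)

theorem IsGenericShift.mem_span (hu : IsGenericShift x u) :
    u ∈ Submodule.span ℝ (Set.range x) := by
  obtain ⟨β, -, rfl⟩ := hu.exists_eq_sum_smul
  exact sum_smul_mem_span_range β

theorem intCast_add_pos_iff_of_abs_lt_one {n : ℤ} {r : ℝ} (hr : r ≠ 0) (hr1 : |r| < 1) :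
    0 < n + r ↔ (if r < 0 then 1 else 0) ≤ n := by
  obtain ⟨hgt, hlt⟩ := abs_lt.1 hr1
  split_ifs with hneg
  · refine ⟨fun h => ?_, fun h => ?_⟩
    · exact_mod_cast (by linarith : (0 : ℝ) < n)
    · linarith [(by exact_mod_cast h : (1 : ℝ) ≤ n)]
  · have hpos : 0 < r := hr.lt_of_le' (not_lt.1 hneg)
    refine ⟨fun h => ?_, fun h => ?_⟩
    · exact Int.lt_add_one_iff.1 (by exact_mod_cast (by linarith : (0 : ℝ) < n + 1))
    · linarith [(by exact_mod_cast h : (0 : ℝ) ≤ n)]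

/-- The coordinates of the lattice point with address `b` in the half-open simplex of `T`. -/
noncomputable def halfOpenCoord (x : ι → W) (u : W) (T : Finset ι) (b : ι →₀ ℕ) (f : ι) : ℕ :=
  b f + if coordOn ℝ x T u f < 0 then 1 else 0

/-- The lattice point with address `b` in the half-open simplex of `T`. -/
noncomputable def halfOpenPoint (x : ι → W) (u : W) (T : Finset ι) (b : ι →₀ ℕ) : W :=
  ∑ f, (halfOpenCoord x u T b f : ℝ) • x f

theorem halfOpenPoint_mem (hx : IsUnimodularConfig L x) (b : ι →₀ ℕ) :
    halfOpenPoint x u T b ∈ L :=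
  sum_mem fun f _ => by
    rw [Nat.cast_smul_eq_nsmul]
    exact nsmul_mem (hx.mem f) _

theorem halfOpenCoord_of_notMem (hb : b.support ⊆ T) {f : ι} (hf : f ∉ T) :
    halfOpenCoord x u T b f = 0 := by
  have hbf : b f = 0 := Finsupp.notMem_support_iff.1 fun h => hf (hb h)
  simp [halfOpenCoord, hbf, coordOn_of_notMem u hf]

theorem sum_halfOpenCoord (hb : b.support ⊆ T) :
    ∑ f, halfOpenCoord x u T b f = ∑ f ∈ T, b f + #(negIndices x u T) := by
  have hbT : ∑ f, b f = ∑ f ∈ T, b f := (sum_subset (subset_univ T) fun f _ hf =>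
    Finsupp.notMem_support_iff.1 fun h => hf (hb h)).symm
  simp only [halfOpenCoord, sum_add_distrib, hbT, negIndices, card_filter]

theorem coordOn_halfOpenPoint (hT : IsConfigBasis ℝ x T) (hb : b.support ⊆ T) (f : ι) :
    coordOn ℝ x T (halfOpenPoint x u T b) f = halfOpenCoord x u T b f :=
  (congrFun (eq_coordOn_of_sum_smul_eq hT.1
    (fun g hg => by rw [halfOpenCoord_of_notMem hb hg, Nat.cast_zero]) rfl) f).symm

theorem halfOpenPoint_injOn (hT : IsConfigBasis ℝ x T) :
    Set.InjOn (halfOpenPoint x u T) {b | b.support ⊆ T} := fun b hb c hc hbc => by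
  ext f
  have hcoord : (halfOpenCoord x u T b f : ℝ) = halfOpenCoord x u T c f := by
    rw [← coordOn_halfOpenPoint hT hb, hbc, coordOn_halfOpenPoint hT hc]
  simpa [halfOpenCoord] using hcoord

theorem IsGenericShift.coordOn_add_pos_iff (hu : IsGenericShift x u) (hT : IsConfigBasis ℝ x T)
    {f : ι} (hf : f ∈ T) {n : ℤ} (hn : (n : ℝ) = coordOn ℝ x T z f) :
    0 < coordOn ℝ x T (z + u) f ↔ (if coordOn ℝ x T u f < 0 then 1 else 0) ≤ n := by
  rw [map_add, Pi.add_apply, ← hn, intCast_add_pos_iff_of_abs_lt_one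
    (hu.coordOn_ne_zero T hT f hf) (hu.abs_coordOn_lt_one T hT f)]

theorem IsGenericShift.coordOn_halfOpenPoint_add_pos (hu : IsGenericShift x u)
    (hT : IsConfigBasis ℝ x T) (hb : b.support ⊆ T) {f : ι} (hf : f ∈ T) :
    0 < coordOn ℝ x T (halfOpenPoint x u T b + u) f := by
  rw [hu.coordOn_add_pos_iff hT hf (n := halfOpenCoord x u T b f)
    (by rw [coordOn_halfOpenPoint hT hb, Int.cast_natCast]), halfOpenCoord]
  push_cast
  exact le_add_of_nonneg_left (Int.natCast_nonneg _)

theorem IsOptimalBasis.eq_of_halfOpenPoint_eq (hw : IsGenericCost x w) (hu : IsGenericShift x u)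
    (hS : IsOptimalBasis x w S) (hT : IsOptimalBasis x w T) {c : ι →₀ ℕ} (hb : b.support ⊆ S)
    (hc : c.support ⊆ T) (hbc : halfOpenPoint x u S b = halfOpenPoint x u T c) : S = T :=
  hS.unique hw hT (z := halfOpenPoint x u S b + u)
    (add_mem (sum_smul_mem_span_range _) hu.mem_span)
    (fun _ hf => hu.coordOn_halfOpenPoint_add_pos hS.isConfigBasis hb hf)
    (fun _ hf => hbc ▸ hu.coordOn_halfOpenPoint_add_pos hT.isConfigBasis hc hf)

theorem exists_isOptimalBasis_coordOn_add_pos (hw : IsTriangulatingCost x w)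
    (hx : IsUnimodularConfig L x) (hu : IsGenericShift x u) (hzL : z ∈ L) {α : ι → ℝ}
    (hα : 0 ≤ α) (hz : ∑ f, α f • x f = z) :
    ∃ T, IsOptimalBasis x w T ∧ ∀ f ∈ T, 0 < coordOn ℝ x T (z + u) f := by
  obtain ⟨β, hβ, hβu⟩ := hu.exists_eq_sum_smul
  have hsum : ∑ f, (α + β) f • x f = z + u := by
    simp only [Pi.add_apply, add_smul, sum_add_distrib, hz, hβu]
  rw [← hsum]
  refine exists_isOptimalBasis hw.pos hw.isGenericCost (add_nonneg hα hβ) fun T hT f hf hzero => ?_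
  obtain ⟨n, hn⟩ := hx.exists_int_eq_coordOn T hT z hzL (hz ▸ sum_smul_mem_span_range α) f
  have hint : coordOn ℝ x T u f = (-n : ℤ) := by
    rw [hsum, map_add, Pi.add_apply, ← hn] at hzero
    push_cast
    linarith
  have hlt := hu.abs_coordOn_lt_one T hT f
  rw [hint, ← Int.cast_abs, ← Int.cast_one, Int.cast_lt, Int.abs_lt_one_iff] at hlt
  exact hu.coordOn_ne_zero T hT f hf (by rw [hint, hlt, Int.cast_zero])

theorem IsTriangulatingCost.sum_coordOn_le (hw : IsTriangulatingCost x w)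
    (hT : IsOptimalBasis x w T) {α : ι → ℝ} (hα : 0 ≤ α) :
    ∑ g, coordOn ℝ x T (∑ f, α f • x f) g ≤ ∑ f, α f := calc
  _ = ∑ f, α f * ∑ g, coordOn ℝ x T (x f) g := by
    simp only [coordOn_sum_smul, mul_sum]
    exact sum_comm
  _ ≤ ∑ f, α f := sum_le_sum fun f _ =>
    mul_le_of_le_one_right (hα f) (hw.sum_coordOn_le_one T hT f)

variable [DecidableEq ι]

theorem exists_halfOpenPoint_eq (hw : IsTriangulatingCost x w) (hx : IsUnimodularConfig L x)
    (hu : IsGenericShift x u) (hT : IsOptimalBasis x w T) (hzL : z ∈ L)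
    (hz : z ∈ (k : ℝ) • zeroHull x) (hpos : ∀ f ∈ T, 0 < coordOn ℝ x T (z + u) f) :
    ∃ b ∈ natSimplex T (k + 1 - #(negIndices x u T)), halfOpenPoint x u T b = z := by
  obtain ⟨α, hα, hαk, rfl⟩ := (mem_smul_zeroHull k.cast_nonneg).1 hz
  have hspan := sum_smul_mem_span_range (x := x) α
  choose n hn using hx.exists_int_eq_coordOn T hT.isConfigBasis _ hzL hspan
  have hn0 : ∀ f ∉ T, n f = 0 := fun f hf => by
    exact_mod_cast (hn f).trans (coordOn_of_notMem _ hf)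
  have hshift : ∀ f, (if coordOn ℝ x T u f < 0 then 1 else 0) ≤ n f := fun f => by
    by_cases hf : f ∈ T
    · exact (hu.coordOn_add_pos_iff hT.isConfigBasis hf (hn f)).1 (hpos f hf)
    · simp [coordOn_of_notMem u hf, hn0 f hf]
  set b : ι →₀ ℕ := Finsupp.equivFunOnFinite.symm fun f =>
    (n f - if coordOn ℝ x T u f < 0 then 1 else 0).toNat
  have hb : b.support ⊆ T := fun f hfb => by
    by_contra hf
    exact Finsupp.mem_support_iff.1 hfb (by simp [b, coordOn_of_notMem u hf, hn0 f hf])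
  have hbn : ∀ f, (halfOpenCoord x u T b f : ℤ) = n f := fun f => by
    simp only [halfOpenCoord, Nat.cast_add, b, Finsupp.equivFunOnFinite_symm_apply_apply,
      Int.toNat_of_nonneg (sub_nonneg.2 (hshift f))]
    push_cast
    ring
  have hsum : ∑ f, halfOpenCoord x u T b f ≤ k := by
    have hle := (hw.sum_coordOn_le hT hα).trans hαk
    simp only [← hn, ← hbn] at hle
    exact_mod_cast hle
  rw [sum_halfOpenCoord hb] at hsum
  refine ⟨b, mem_natSimplex.2 ⟨hb, by omega⟩, ?_⟩
  refine Eq.trans (sum_congr rfl fun f _ => ?_) (hT.isConfigBasis.sum_coordOn_smul hspan)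
  rw [← hn, ← hbn, Int.cast_natCast]

theorem bijOn_halfOpenPoint (hw : IsTriangulatingCost x w) (hx : IsUnimodularConfig L x)
    (hu : IsGenericShift x u) (k : ℕ) :
    Set.BijOn (fun p : (_ : Finset ι) × (ι →₀ ℕ) => halfOpenPoint x u p.1 p.2)
      ((optimalBases x w).sigma fun T => natSimplex T (k + 1 - #(negIndices x u T)))
      {z | z ∈ L ∧ z ∈ (k : ℝ) • zeroHull x} := by
  have hmem : ∀ {T b}, (⟨T, b⟩ : (_ : Finset ι) × (ι →₀ ℕ)) ∈ (SetLike.coe <|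
      (optimalBases x w).sigma fun T => natSimplex T (k + 1 - #(negIndices x u T))) ↔
      IsOptimalBasis x w T ∧ b.support ⊆ T ∧ ∑ f ∈ T, b f < k + 1 - #(negIndices x u T) := by
    simp [mem_optimalBases, mem_natSimplex]
  refine ⟨?_, ?_, ?_⟩
  · rintro ⟨T, b⟩ hTb
    obtain ⟨-, hb, hsum⟩ := hmem.1 hTb
    have hle : ∑ f, (halfOpenCoord x u T b f : ℝ) ≤ k := by
      rw [← Nat.cast_sum, sum_halfOpenCoord hb, Nat.cast_le]
      omega
    exact ⟨halfOpenPoint_mem hx b, (mem_smul_zeroHull k.cast_nonneg).2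
      ⟨fun f => halfOpenCoord x u T b f, fun f => Nat.cast_nonneg _, hle, rfl⟩⟩
  · rintro ⟨S, b⟩ hSb ⟨T, c⟩ hTc (hbc : halfOpenPoint x u S b = halfOpenPoint x u T c)
    obtain ⟨hS, hb, -⟩ := hmem.1 hSb
    obtain ⟨hT, hc, -⟩ := hmem.1 hTc
    obtain rfl := hS.eq_of_halfOpenPoint_eq hw.isGenericCost hu hT hb hc hbc
    rw [halfOpenPoint_injOn hS.isConfigBasis hb hc hbc]
  · rintro z ⟨hzL, hz⟩
    obtain ⟨α, hα, -, hαz⟩ := (mem_smul_zeroHull k.cast_nonneg).1 hz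
    obtain ⟨T, hT, hpos⟩ := exists_isOptimalBasis_coordOn_add_pos hw hx hu hzL hα hαz
    obtain ⟨b, hb, hbz⟩ := exists_halfOpenPoint_eq hw hx hu hT hzL hz hpos
    exact ⟨⟨T, b⟩, mem_coe.2 (mem_sigma.2 ⟨mem_optimalBases.2 hT, hb⟩), hbz⟩

theorem ncard_inter_smul_zeroHull (hw : IsTriangulatingCost x w) (hx : IsUnimodularConfig L x)
    (hu : IsGenericShift x u) (k : ℕ) :
    {z | z ∈ L ∧ z ∈ (k : ℝ) • zeroHull x}.ncard =
      ∑ T ∈ optimalBases x w, #(natSimplex T (k + 1 - #(negIndices x u T))) := by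
  rw [← (bijOn_halfOpenPoint hw hx hu k).ncard_eq, Set.ncard_coe_finset, card_sigma]

end LatticePointCount

section HStar

variable {ι κ : Type*}

/-- The integer points of `ℝ^κ`. -/
def integerLattice (κ : Type*) : AddSubgroup (κ → ℝ) := ((Int.castAddHom ℝ).compLeft κ).range

theorem mem_integerLattice {z : κ → ℝ} :
    z ∈ integerLattice κ ↔ ∃ p : κ → ℤ, (fun i => (p i : ℝ)) = z := Iff.rfl

theorem latCount_eq_ncard [Fintype κ] (Q : Set (κ → ℝ)) (k : ℕ) :
    latCount Q k = {z | z ∈ integerLattice κ ∧ z ∈ (k : ℝ) • Q}.ncard := by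
  have hinj : Function.Injective fun (p : κ → ℤ) i => (p i : ℝ) :=
    Int.cast_injective.comp_left
  rw [latCount, ← Set.coe_ofPred, Nat.card_coe_set_eq, ← Set.ncard_image_of_injective _ hinj]
  congr 1
  ext z
  constructor
  · rintro ⟨p, hp, rfl⟩
    exact ⟨⟨p, rfl⟩, hp⟩
  · rintro ⟨⟨p, rfl⟩, hp⟩
    exact ⟨p, hp, rfl⟩

theorem IsHStar.unique [Fintype κ] {Q : Set (κ → ℝ)} {p q : Polynomial ℤ}
    (hp : IsHStar Q p) (hq : IsHStar Q q) : p = q := by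
  ext i
  simpa using congrArg (PowerSeries.coeff i) (hp.symm.trans hq)

variable [Fintype κ] [Fintype ι] {x : ι → κ → ℝ} {w : ι → ℝ} {u : κ → ℝ}

theorem one_sub_X_pow_mul_ehrSeries_zeroHull (hw : IsTriangulatingCost x w)
    (hx : IsUnimodularConfig (integerLattice κ) x) (hu : IsGenericShift x u) :
    (1 - PowerSeries.X) ^ (pdim (zeroHull x) + 1) * ehrSeries (zeroHull x) =
      ∑ T ∈ optimalBases x w, PowerSeries.X ^ #(negIndices x u T) := by
  classical
  have hseries : ehrSeries (zeroHull x) = ∑ T ∈ optimalBases x w,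
      PowerSeries.mk fun k => (#(natSimplex T (k + 1 - #(negIndices x u T))) : ℤ) := by
    ext k
    simp only [ehrSeries, latCount_eq_ncard, ncard_inter_smul_zeroHull hw hx hu, map_sum,
      PowerSeries.coeff_mk, Nat.cast_sum]
  rw [hseries, mul_comm, sum_mul]
  refine sum_congr rfl fun T hT => ?_
  rw [pdim_zeroHull, ← (mem_optimalBases.1 hT).isConfigBasis.card_eq_finrank,
    mk_card_natSimplex_mul_one_sub_X_pow]

theorem IsHStar.coeff_eq_card {p : Polynomial ℤ} (hp : IsHStar (zeroHull x) p)
    (hw : IsTriangulatingCost x w) (hx : IsUnimodularConfig (integerLattice κ) x)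
    (hu : IsGenericShift x u) (i : ℕ) :
    p.coeff i = #{T ∈ optimalBases x w | #(negIndices x u T) = i} := by
  have hcoeff := congrArg (PowerSeries.coeff i)
    (hp.symm.trans (one_sub_X_pow_mul_ehrSeries_zeroHull hw hx hu))
  rw [PowerSeries.coeff_mk] at hcoeff
  simp only [hcoeff, map_sum, PowerSeries.coeff_X_pow, card_filter, Nat.cast_sum, Nat.cast_ite,
    Nat.cast_one, Nat.cast_zero, eq_comm]

end HStar

section ConfigContraction

variable {ι W : Type*} [AddCommGroup W] [Module ℝ W] {L : AddSubgroup W} {x : ι → W}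
  {l : W →ₗ[ℝ] ℝ} {e : ι} {w : ι → ℝ} {u z : W} {T : Finset {f // f ≠ e}}

/-- The linear map `z ↦ z - l z • v`. If `l v = 1`, this is the projection along `v` onto the
kernel of `l`, which serves as a model of the quotient by `v`. -/
def projAlong (l : W →ₗ[ℝ] ℝ) (v : W) : W →ₗ[ℝ] W := LinearMap.id - l.smulRight v

theorem projAlong_apply (l : W →ₗ[ℝ] ℝ) (v z : W) : projAlong l v z = z - l z • v := rfl

/-- The contraction of the configuration `x` at `e`, realized in the kernel of `l` rather than in
the quotient by `x e`. -/
def contract (x : ι → W) (l : W →ₗ[ℝ] ℝ) (e : ι) (f : {f // f ≠ e}) : W :=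
  projAlong l (x e) (x f)

theorem contract_mem {A : Type*} [SetLike A W] [AddSubgroupClass A W] {s : A}
    (hx : ∀ f, x f ∈ s) (hs : ∀ f, l (x f) • x e ∈ s) (f : {f // f ≠ e}) :
    contract x l e f ∈ s :=
  sub_mem (hx f) (hs f)

theorem span_range_contract_le (x : ι → W) (l : W →ₗ[ℝ] ℝ) (e : ι) :
    Submodule.span ℝ (Set.range (contract x l e)) ≤ Submodule.span ℝ (Set.range x) := by
  have hx : ∀ f, x f ∈ Submodule.span ℝ (Set.range x) := fun f => Submodule.subset_span ⟨f, rfl⟩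
  rw [Submodule.span_le, Set.range_subset_iff]
  exact contract_mem hx fun f => Submodule.smul_mem _ _ (hx e)

theorem projAlong_of_mem_span_range_contract (he : l (x e) = 1)
    (hz : z ∈ Submodule.span ℝ (Set.range (contract x l e))) : projAlong l (x e) z = z := by
  have hker : Submodule.span ℝ (Set.range (contract x l e)) ≤ LinearMap.ker l := by
    rw [Submodule.span_le]
    rintro _ ⟨f, rfl⟩
    simp [contract, projAlong_apply, he]
  rw [projAlong_apply, LinearMap.mem_ker.1 (hker hz), zero_smul, sub_zero]

variable [DecidableEq ι]

/-- The subset of `ι` which the contraction at `e` takes to `T`. -/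
def liftFinset (e : ι) (T : Finset {f // f ≠ e}) : Finset ι :=
  insert e (T.map (Function.Embedding.subtype _))

theorem self_mem_liftFinset (e : ι) (T : Finset {f // f ≠ e}) : e ∈ liftFinset e T :=
  mem_insert_self _ _

theorem coe_mem_liftFinset {f : {f // f ≠ e}} : ↑f ∈ liftFinset e T ↔ f ∈ T := by
  simp [liftFinset, f.2]

theorem liftFinset_injective (e : ι) : Function.Injective (liftFinset e) := fun S T h => by
  ext f
  rw [← coe_mem_liftFinset, h, coe_mem_liftFinset]

theorem projAlong_sum_smul [Fintype ι] (he : l (x e) = 1) (c : ι → ℝ) :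
    projAlong l (x e) (∑ f, c f • x f) = ∑ f : {f // f ≠ e}, c f • contract x l e f := by
  have hself : projAlong l (x e) (x e) = 0 := by rw [projAlong_apply, he, one_smul, sub_self]
  rw [map_sum, Fintype.sum_eq_add_sum_subtype_ne _ e, map_smul, hself, smul_zero, zero_add]
  exact sum_congr rfl fun f _ => map_smul _ _ _

theorem linearIndepOn_liftFinset [Finite ι] (he : l (x e) = 1)
    (hT : LinearIndepOn ℝ (contract x l e) ↑T) : LinearIndepOn ℝ x ↑(liftFinset e T) := by
  cases nonempty_fintype ι
  rw [linearIndepOn_finset_iff]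
  intro c hc
  set d : ι → ℝ := fun f => if f ∈ liftFinset e T then c f else 0
  have hd : ∑ f, d f • x f = 0 := by
    simpa only [d, ite_smul, zero_smul, sum_ite_mem, univ_inter] using hc
  have hd0 : ∀ f : {f // f ≠ e}, d f = 0 := congrFun <|
    (eq_coordOn_of_sum_smul_eq (c := fun f : {f // f ≠ e} => d f) hT
      (fun f hf => if_neg (mt coe_mem_liftFinset.1 hf))
      (by rw [← projAlong_sum_smul he, hd, map_zero])).trans (map_zero _)
  have hde : d e = 0 := by
    rw [Fintype.sum_eq_add_sum_subtype_ne _ e] at hd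
    simpa [hd0, he] using congrArg l hd
  intro f hf
  have hdf : d f = c f := if_pos hf
  obtain rfl | hfe := eq_or_ne f e
  · rw [← hdf, hde]
  · rw [← hdf, hd0 ⟨f, hfe⟩]

protected theorem IsConfigBasis.liftFinset [Finite ι] (he : l (x e) = 1)
    (hT : IsConfigBasis ℝ (contract x l e) T) :
    IsConfigBasis ℝ x (liftFinset e T) := by
  set M := Submodule.span ℝ (x '' ↑(liftFinset e T))
  have heM : x e ∈ M := Submodule.subset_span ⟨e, self_mem_liftFinset e T, rfl⟩
  have hle : Submodule.span ℝ (contract x l e '' ↑T) ≤ M := by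
    rw [Submodule.span_le]
    rintro _ ⟨f, hf, rfl⟩
    exact sub_mem (Submodule.subset_span ⟨f, coe_mem_liftFinset.2 hf, rfl⟩) (M.smul_mem _ heM)
  refine ⟨linearIndepOn_liftFinset he hT.1, fun f => ?_⟩
  obtain rfl | hfe := eq_or_ne f e
  · exact heM
  · rw [← sub_add_cancel (x f) (l (x f) • x e)]
    exact add_mem (hle (hT.2 ⟨f, hfe⟩)) (M.smul_mem _ heM)

variable [Fintype ι]

theorem coordOn_liftFinset (he : l (x e) = 1) (hT : IsConfigBasis ℝ (contract x l e) T)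
    (hz : z ∈ Submodule.span ℝ (Set.range x)) (f : {f // f ≠ e}) :
    coordOn ℝ x (liftFinset e T) z f = coordOn ℝ (contract x l e) T (projAlong l (x e) z) f :=
  congrFun (eq_coordOn_of_sum_smul_eq (c := fun f : {f // f ≠ e} => coordOn ℝ x _ z f) hT.1
    (fun _ hf => coordOn_of_notMem z (mt coe_mem_liftFinset.1 hf))
    (by rw [← projAlong_sum_smul he, (hT.liftFinset he).sum_coordOn_smul hz])) f

theorem coordOn_liftFinset_apply (he : l (x e) = 1) (hT : IsConfigBasis ℝ (contract x l e) T)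
    (f g : {f // f ≠ e}) :
    coordOn ℝ x (liftFinset e T) (x f) g = coordOn ℝ (contract x l e) T (contract x l e f) g :=
  coordOn_liftFinset he hT (Submodule.subset_span ⟨f, rfl⟩) g

/-- The cost of the contraction at `e` for which reduced costs do not change: since
`x f = contract x l e f + l (x f) • x e`, the cost of the multiple of `x e` is subtracted. -/
def contractCost (x : ι → W) (l : W →ₗ[ℝ] ℝ) (w : ι → ℝ) (e : ι) (f : {f // f ≠ e}) : ℝ :=
  w f - l (x f) * w e

theorem reducedCost_liftFinset (he : l (x e) = 1) (hT : IsConfigBasis ℝ (contract x l e) T)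
    (f : {f // f ≠ e}) :
    reducedCost x w (liftFinset e T) f =
      reducedCost (contract x l e) (contractCost x l w e) T f := by
  have hl := congrArg l (sum_coordOn_smul ((hT.liftFinset he).2 f))
  rw [Fintype.sum_eq_add_sum_subtype_ne _ e] at hl
  simp only [map_add, map_smul, map_sum, smul_eq_mul, he, mul_one,
    coordOn_liftFinset_apply he hT] at hl
  rw [reducedCost, reducedCost, Fintype.sum_eq_add_sum_subtype_ne _ e, eq_sub_of_add_eq hl]
  simp only [coordOn_liftFinset_apply he hT, contractCost, mul_sub, sum_sub_distrib, ← mul_assoc,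
    ← sum_mul]
  ring

protected theorem IsOptimalBasis.liftFinset (he : l (x e) = 1)
    (hT : IsOptimalBasis (contract x l e) (contractCost x l w e) T) :
    IsOptimalBasis x w (liftFinset e T) := by
  have hbasis := hT.isConfigBasis.liftFinset he
  refine ⟨hbasis, fun f => ?_⟩
  obtain rfl | hfe := eq_or_ne f e
  · simp [reducedCost, coordOn_self hbasis.1 (self_mem_liftFinset f T), Pi.single_apply]
  · rw [reducedCost_liftFinset he hT.isConfigBasis ⟨f, hfe⟩]
    exact hT.reducedCost_nonneg _

protected theorem IsGenericCost.contract (hw : IsGenericCost x w) (he : l (x e) = 1) :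
    IsGenericCost (contract x l e) (contractCost x l w e) := fun T hT f hf => by
  rw [← reducedCost_liftFinset he hT]
  exact hw _ (hT.liftFinset he) f (mt coe_mem_liftFinset.1 hf)

protected theorem IsUnimodularConfig.contract (hx : IsUnimodularConfig L x) (he : l (x e) = 1)
    (hl : ∀ f, ∃ n : ℤ, (n : ℝ) = l (x f)) : IsUnimodularConfig L (contract x l e) where
  mem := contract_mem hx.mem fun f => by
    obtain ⟨n, hn⟩ := hl f
    rw [← hn, Int.cast_smul_eq_zsmul]
    exact zsmul_mem (hx.mem e) n
  exists_int_eq_coordOn T hT z hzL hz f := by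
    have hzx := span_range_contract_le x l e hz
    rw [← projAlong_of_mem_span_range_contract he hz, ← coordOn_liftFinset he hT hzx]
    exact hx.exists_int_eq_coordOn _ (hT.liftFinset he) z hzL hzx f

protected theorem IsGenericShift.contract (hu : IsGenericShift x u) (he : l (x e) = 1) :
    IsGenericShift (contract x l e) (projAlong l (x e) u) where
  exists_eq_sum_smul := by
    obtain ⟨β, hβ, rfl⟩ := hu.exists_eq_sum_smul
    exact ⟨fun f => β f, fun f => hβ f, (projAlong_sum_smul he β).symm⟩
  coordOn_ne_zero T hT f hf := by
    rw [← coordOn_liftFinset he hT hu.mem_span]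
    exact hu.coordOn_ne_zero _ (hT.liftFinset he) f (coe_mem_liftFinset.2 hf)
  abs_coordOn_lt_one T hT f := by
    rw [← coordOn_liftFinset he hT hu.mem_span]
    exact hu.abs_coordOn_lt_one _ (hT.liftFinset he) f

theorem card_negIndices_liftFinset (he : l (x e) = 1) (hT : IsConfigBasis ℝ (contract x l e) T)
    (hu : u ∈ Submodule.span ℝ (Set.range x)) (hue : 0 < coordOn ℝ x (liftFinset e T) u e) :
    #(negIndices x u (liftFinset e T)) =
      #(negIndices (contract x l e) (projAlong l (x e) u) T) := by
  simp only [negIndices, card_filter, Fintype.sum_eq_add_sum_subtype_ne _ e, if_neg hue.not_gt,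
    zero_add, coordOn_liftFinset he hT hu]

end ConfigContraction

section CheapCost

variable {ι W : Type*} [AddCommGroup W] [Module ℝ W] {x : ι → W} {l : W →ₗ[ℝ] ℝ} {w : ι → ℝ}
  {e : ι} {δ : ℝ}

theorem exists_pos_le_abs_mul_le [Finite ι] (l : ι → ℝ) :
    ∃ δ : ℝ, 0 < δ ∧ δ ≤ 1 / 4 ∧ ∀ f, |l f| * δ ≤ 1 / 4 := by
  cases nonempty_fintype ι
  have hS : 0 ≤ ∑ f, |l f| := sum_nonneg fun f _ => abs_nonneg _
  refine ⟨(4 * (1 + ∑ f, |l f|))⁻¹, by positivity, ?_, fun f => ?_⟩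
  · rw [inv_le_comm₀ (by positivity) (by positivity)]
    linarith
  · have hf := single_le_sum (f := fun g => |l g|) (fun g _ => abs_nonneg _) (mem_univ f)
    rw [← div_eq_mul_inv, div_le_iff₀ (by positivity)]
    linarith

variable [DecidableEq ι]

/-- The cost for which `x e` is cheap and the other vectors all have cost one. -/
def cheapCost (e : ι) (δ : ℝ) : ι → ℝ := Function.update 1 e δ

theorem contractCost_pos_of_near_cheapCost (hδ : δ ≤ 1 / 4)
    (hl : ∀ f, |l (x f)| * δ ≤ 1 / 4) (hw : ∀ f, |w f - cheapCost e δ f| < δ / 2)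
    (f : {f // f ≠ e}) : 0 < contractCost x l w e f := by
  have hwf := abs_lt.1 (hw f)
  have hwe := abs_lt.1 (hw e)
  rw [cheapCost, Function.update_of_ne f.2, Pi.one_apply] at hwf
  rw [cheapCost, Function.update_self] at hwe
  have hle : l (x f) * w e ≤ |l (x f)| * (3 / 2 * δ) := by
    refine (mul_le_mul_of_nonneg_right (le_abs_self _) ?_).trans
      (mul_le_mul_of_nonneg_left ?_ (abs_nonneg _)) <;> linarith
  rw [contractCost]
  linarith [hl f]

theorem le_cheapCost (hδ : δ ≤ 1) (f : ι) : δ ≤ cheapCost e δ f := by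
  rw [cheapCost, Function.update_apply]
  split_ifs
  exacts [le_rfl, hδ]

end CheapCost

section GenericChoice

variable {ι W : Type*} [Fintype ι] [AddCommGroup W] [Module ℝ W] {L : AddSubgroup W} {x : ι → W}
  {w w₀ : ι → ℝ} {T : Finset ι} {U : Set (ι → ℝ)}

theorem exists_mem_forall_sum_mul_ne_zero {κ : Type*} [Finite κ] {a : κ → ι → ℝ}
    (ha : ∀ i, a i ≠ 0) (hU : IsOpen U) (hne : U.Nonempty) :
    ∃ c ∈ U, ∀ i, ∑ f, c f * a i f ≠ 0 := by
  classical
  have hdense : Dense (⋂ i, {c : ι → ℝ | ∑ f, c f * a i f ≠ 0}) := by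
    refine dense_iInter_of_isOpen
      (fun i => isOpen_ne_fun (by fun_prop) continuous_const) fun i => ?_
    set φ := Fintype.linearCombination ℝ (a i)
    have hker : LinearMap.ker φ ≠ ⊤ := fun htop => ha i <| by
      ext f
      have hf := LinearMap.congr_fun (LinearMap.ker_eq_top.1 htop) (Pi.single f 1)
      simpa [φ, Fintype.linearCombination_apply_single] using hf
    change Dense (LinearMap.ker φ : Set (ι → ℝ))ᶜ
    rw [← interior_eq_empty_iff_dense_compl, ← Set.not_nonempty_iff_eq_empty]
    exact fun hint => hker (Submodule.eq_top_of_nonempty_interior' _ hint)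
  obtain ⟨c, hcU, hc⟩ := hdense.inter_open_nonempty U hU hne
  exact ⟨c, hcU, fun i => Set.mem_iInter.1 hc i⟩

theorem exists_isGenericCost_mem (x : ι → W) (hU : IsOpen U) (hne : U.Nonempty) :
    ∃ w ∈ U, IsGenericCost x w := by
  classical
  obtain ⟨w, hwU, hw⟩ := exists_mem_forall_sum_mul_ne_zero
    (a := fun p : {p : Finset ι × ι // p.2 ∉ p.1} =>
      Pi.single p.1.2 1 - coordOn ℝ x p.1.1 (x p.1.2))
    (fun p h => by simpa [coordOn_of_notMem _ p.2] using congrFun h p.1.2) hU hne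
  refine ⟨w, hwU, fun T _ f hf => ?_⟩
  rw [← sum_single_sub_coordOn_mul]
  simpa only [mul_comm] using hw ⟨(T, f), hf⟩

theorem exists_mem_forall_coordOn_ne_zero (x : ι → W) (hU : IsOpen U) (hne : U.Nonempty) :
    ∃ β ∈ U, ∀ T, IsConfigBasis ℝ x T → ∀ f ∈ T, coordOn ℝ x T (∑ g, β g • x g) f ≠ 0 := by
  classical
  obtain ⟨β, hβU, hβ⟩ := exists_mem_forall_sum_mul_ne_zero
    (a := fun (p : {p : Finset ι × ι // IsConfigBasis ℝ x p.1 ∧ p.2 ∈ p.1}) g =>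
      coordOn ℝ x p.1.1 (x g) p.1.2)
    (fun p h => by simpa [coordOn_self p.2.1.1 p.2.2] using congrFun h p.1.2) hU hne
  refine ⟨β, hβU, fun T hT f hf => ?_⟩
  rw [coordOn_sum_smul]
  exact hβ ⟨(T, f), hT, hf⟩

theorem exists_pos_sum_lt_one_sum_lt_two_mul (e : ι) :
    ∃ β : ι → ℝ, (∀ f, 0 < β f) ∧ ∑ f, β f < 1 ∧ ∑ f, β f < 2 * β e := by
  classical
  set r : ℝ := (4 * (Fintype.card ι + 1))⁻¹
  have hr : 0 < r := by positivity
  have hcard : Fintype.card ι * r + r = 1 / 4 := by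
    simp only [r]
    field_simp
  have hsingle : (0 : ι → ℝ) ≤ Pi.single e (1 / 2) := Pi.single_nonneg.2 one_half_pos.le
  have hsum : ∑ f, (r + (Pi.single e (1 / 2) : ι → ℝ) f) = Fintype.card ι * r + 1 / 2 := by
    simp [sum_add_distrib]
  refine ⟨fun f => r + (Pi.single e (1 / 2) : ι → ℝ) f,
    fun f => add_pos_of_pos_of_nonneg hr (hsingle f), ?_, ?_⟩
  · rw [hsum]
    linarith
  · simp only [hsum, Pi.single_eq_same]
    linarith

theorem IsUnimodularConfig.abs_coordOn_sum_smul_le (hx : IsUnimodularConfig L x)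
    (hT : IsConfigBasis ℝ x T) (c : ι → ℝ) (g : ι) :
    |coordOn ℝ x T (∑ f, c f • x f) g| ≤ ∑ f, |c f| := by
  rw [coordOn_sum_smul]
  refine (abs_sum_le_sum_abs _ _).trans (sum_le_sum fun f _ => ?_)
  rw [abs_mul]
  exact mul_le_of_le_one_right (abs_nonneg _) (hx.abs_coordOn_le_one hT f g)

theorem IsUnimodularConfig.coordOn_sum_smul_pos (hx : IsUnimodularConfig L x)
    (hT : IsConfigBasis ℝ x T) {β : ι → ℝ} (hβ : ∀ f, 0 < β f) {e : ι} (he : e ∈ T)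
    (hlt : ∑ f, β f < 2 * β e) : 0 < coordOn ℝ x T (∑ f, β f • x f) e := by
  classical
  have hle : ∀ f ∈ univ.erase e, -β f ≤ β f * coordOn ℝ x T (x f) e := fun f _ => by
    have := (abs_le.1 (hx.abs_coordOn_le_one hT f e)).1
    nlinarith [hβ f]
  have hsum := sum_le_sum hle
  rw [sum_neg_distrib] at hsum
  rw [← add_sum_erase univ β (mem_univ e)] at hlt
  rw [coordOn_sum_smul, ← add_sum_erase univ _ (mem_univ e), coordOn_self hT.1 he,
    Pi.single_eq_same]
  linarith

theorem IsUnimodularConfig.exists_isGenericShift (hx : IsUnimodularConfig L x) (e : ι) :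
    ∃ u, IsGenericShift x u ∧
      ∀ T, IsConfigBasis ℝ x T → e ∈ T → 0 < coordOn ℝ x T u e := by
  have hopen : IsOpen {β : ι → ℝ | (∀ f, 0 < β f) ∧ ∑ f, β f < 1 ∧ ∑ f, β f < 2 * β e} := by
    have hsum : Continuous fun β : ι → ℝ => ∑ f, β f := by fun_prop
    have hpos : IsOpen {β : ι → ℝ | ∀ f, 0 < β f} := by
      simp only [Set.ofPred_forall]
      exact isOpen_iInter_of_finite fun f => isOpen_lt continuous_const (continuous_apply f)
    exact hpos.inter <| (isOpen_lt hsum continuous_const).inter <|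
      isOpen_lt hsum (continuous_const.mul (continuous_apply e))
  obtain ⟨β, ⟨hβ, hlt_one, hlt⟩, hne⟩ :=
    exists_mem_forall_coordOn_ne_zero x hopen (exists_pos_sum_lt_one_sum_lt_two_mul e)
  refine ⟨_, ⟨⟨β, fun f => (hβ f).le, rfl⟩, hne, fun T hT f => ?_⟩,
    fun T hT he => hx.coordOn_sum_smul_pos hT hβ he hlt⟩
  refine (hx.abs_coordOn_sum_smul_le hT β f).trans_lt ?_
  simpa only [abs_of_pos (hβ _)] using hlt_one

theorem IsUnimodularConfig.reducedCost_le_add (hx : IsUnimodularConfig L x)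
    (hT : IsConfigBasis ℝ x T) (w w₀ : ι → ℝ) (f : ι) :
    reducedCost x w T f ≤ reducedCost x w₀ T f + 2 * ∑ g, |w g - w₀ g| := by
  have hf : w f - w₀ f ≤ ∑ g, |w g - w₀ g| := (le_abs_self _).trans
    (single_le_sum (f := fun g => |w g - w₀ g|) (fun g _ => abs_nonneg _) (mem_univ f))
  have hcoord : -∑ g, |w g - w₀ g| ≤ ∑ g, coordOn ℝ x T (x f) g * (w g - w₀ g) := by
    refine (abs_le.1 ((abs_sum_le_sum_abs _ _).trans (sum_le_sum fun g _ => ?_))).1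
    rw [abs_mul]
    exact mul_le_of_le_one_left (abs_nonneg _) (hx.abs_coordOn_le_one hT f g)
  simp only [mul_sub, sum_sub_distrib] at hcoord
  rw [reducedCost, reducedCost]
  linarith

variable [DecidableEq ι] {e : ι} {δ : ℝ}

theorem sum_mul_cheapCost (c : ι → ℝ) (e : ι) (δ : ℝ) :
    ∑ f, c f * cheapCost e δ f = c e * δ + ∑ f : {f // f ≠ e}, c f := by
  have hcost : ∀ f : {f // f ≠ e}, cheapCost e δ f = 1 := fun f => Function.update_of_ne f.2 _ _
  have he : cheapCost e δ e = δ := Function.update_self ..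
  simp only [Fintype.sum_eq_add_sum_subtype_ne _ e, he, hcost, mul_one]

-- The coordinate sums are integers, so bounds on them survive an error less than `δ` in the cost.
theorem IsUnimodularConfig.sum_coordOn_le_one (hx : IsUnimodularConfig L x)
    (hT : IsConfigBasis ℝ x T) (hδ0 : 0 < δ) (hδ : δ ≤ 1 / 4) (f : ι)
    (hf : -δ < reducedCost x (cheapCost e δ) T f) :
    ∑ g, coordOn ℝ x T (x f) g ≤ 1 ∧
      (f ≠ e → ∑ g : {g // g ≠ e}, coordOn ℝ x T (x f) g ≤ 1) := by
  have habs := abs_le.1 (hx.abs_coordOn_le_one hT f e)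
  choose n hn using hx.exists_int_eq_coordOn_self hT f
  rw [reducedCost, sum_mul_cheapCost] at hf
  rw [Fintype.sum_eq_add_sum_subtype_ne _ e]
  simp only [← hn] at habs hf ⊢
  norm_cast at habs hf ⊢
  generalize ∑ g : {g // g ≠ e}, n g = m at hf ⊢
  obtain rfl | hfe := eq_or_ne f e
  · rw [cheapCost, Function.update_self] at hf
    have hm : (m : ℝ) < 1 := by nlinarith [(by exact_mod_cast habs.1 : (-1 : ℝ) ≤ n f)]
    have hm' : m < 1 := by exact_mod_cast hm
    exact ⟨by omega, fun h => absurd rfl h⟩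
  · rw [cheapCost, Function.update_of_ne hfe, Pi.one_apply] at hf
    have hm : (m : ℝ) < 2 := by nlinarith [(by exact_mod_cast habs.1 : (-1 : ℝ) ≤ n e)]
    have hm' : m < 2 := by exact_mod_cast hm
    refine ⟨?_, fun _ => by omega⟩
    by_contra! hlt
    obtain ⟨rfl, hne⟩ : m = 1 ∧ n e = 1 := by omega
    rw [hne] at hf
    norm_num at hf

theorem IsUnimodularConfig.sum_coordOn_le_one_of_isOptimalBasis (hx : IsUnimodularConfig L x)
    (hT : IsOptimalBasis x w T) (hδ0 : 0 < δ) (hδ : δ ≤ 1 / 4)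
    (hw : ∑ f, |w f - cheapCost e δ f| < δ / 2) (f : ι) :
    ∑ g, coordOn ℝ x T (x f) g ≤ 1 ∧
      (f ≠ e → ∑ g : {g // g ≠ e}, coordOn ℝ x T (x f) g ≤ 1) := by
  refine hx.sum_coordOn_le_one hT.isConfigBasis hδ0 hδ f ?_
  linarith [hT.reducedCost_nonneg f, hx.reducedCost_le_add hT.isConfigBasis w (cheapCost e δ) f]

theorem IsUnimodularConfig.exists_isTriangulatingCost (hx : IsUnimodularConfig L x)
    {l : W →ₗ[ℝ] ℝ} (he : l (x e) = 1) :
    ∃ w, IsTriangulatingCost x w ∧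
      IsTriangulatingCost (contract x l e) (contractCost x l w e) := by
  obtain ⟨δ, hδ0, hδ, hl⟩ := exists_pos_le_abs_mul_le fun f => l (x f)
  have hopen : IsOpen {w : ι → ℝ | ∑ f, |w f - cheapCost e δ f| < δ / 2} :=
    isOpen_lt (by fun_prop) continuous_const
  obtain ⟨w, hw, hgen⟩ :=
    exists_isGenericCost_mem x hopen ⟨cheapCost e δ, by simpa using hδ0⟩
  have hnear : ∀ f, |w f - cheapCost e δ f| < δ / 2 := fun f => lt_of_le_of_lt
    (single_le_sum (f := fun g => |w g - cheapCost e δ g|) (fun g _ => abs_nonneg _) (mem_univ f))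
    hw
  refine ⟨w, ⟨fun f => ?_, hgen, fun T hT f =>
    (hx.sum_coordOn_le_one_of_isOptimalBasis hT hδ0 hδ hw f).1⟩,
    ⟨contractCost_pos_of_near_cheapCost hδ hl hnear, hgen.contract he, fun T hT f => ?_⟩⟩
  · linarith [(abs_lt.1 (hnear f)).1, le_cheapCost (e := e) (by linarith : δ ≤ 1) f]
  · simp only [← coordOn_liftFinset_apply he hT.isConfigBasis]
    exact (hx.sum_coordOn_le_one_of_isOptimalBasis (hT.liftFinset he) hδ0 hδ hw f).2 f.2

end GenericChoice

theorem IsHStar.coeff_le_of_contract {ι κ : Type*} [Fintype ι] [Fintype κ] {x : ι → κ → ℝ}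
    {l : (κ → ℝ) →ₗ[ℝ] ℝ} {e : ι} {p q : Polynomial ℤ}
    (hx : IsUnimodularConfig (integerLattice κ) x) (he : l (x e) = 1)
    (hl : ∀ f, ∃ n : ℤ, (n : ℝ) = l (x f)) (hp : IsHStar (zeroHull (contract x l e)) p)
    (hq : IsHStar (zeroHull x) q) (i : ℕ) : p.coeff i ≤ q.coeff i := by
  classical
  obtain ⟨w, hw, hw'⟩ := hx.exists_isTriangulatingCost he
  obtain ⟨u, hu, hue⟩ := hx.exists_isGenericShift e
  rw [hp.coeff_eq_card hw' (hx.contract he hl) (hu.contract he) i, hq.coeff_eq_card hw hx hu i,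
    Nat.cast_le]
  refine card_le_card_of_injOn (liftFinset e) (fun T hT => ?_) (liftFinset_injective e).injOn
  obtain ⟨hT, hi⟩ := mem_filter.1 hT
  have hT := mem_optimalBases.1 hT
  refine mem_filter.2 ⟨mem_optimalBases.2 (hT.liftFinset he), ?_⟩
  rw [card_negIndices_liftFinset he hT.isConfigBasis hu.mem_span, hi]
  exact hue _ (hT.isConfigBasis.liftFinset he) (self_mem_liftFinset e T)

section Digraph

variable {N A : Type*} [DecidableEq N] {t h : A → N} {e : A}

theorem rootPolyOn_univ (t h : A → N) : rootPolyOn t h Set.univ = zeroHull (xvec t h) := by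
  rw [rootPolyOn, Set.image_univ, zeroHull]

theorem xvec_eq_single_sub_single (t h : A → N) (f : A) :
    xvec t h f = Pi.single (h f) 1 - Pi.single (t f) 1 := by
  ext v
  simp [xvec, Pi.single_apply]

theorem map_xvec (l : (N → ℝ) →ₗ[ℝ] ℝ) (t h : A → N) (f : A) :
    l (xvec t h f) = l (Pi.single (h f) 1) - l (Pi.single (t f) 1) := by
  rw [xvec_eq_single_sub_single, map_sub]

theorem xvec_head (he : t e ≠ h e) : xvec t h e (h e) = 1 := by
  simp [xvec, he.symm]

theorem xvec_of_loop (he : t e = h e) : xvec t h e = 0 := by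
  rw [xvec_eq_single_sub_single, he, sub_self]

theorem xvec_mem_integerLattice (t h : A → N) (f : A) : xvec t h f ∈ integerLattice N :=
  mem_integerLattice.2 ⟨Pi.single (h f) 1 - Pi.single (t f) 1, by
    ext v
    simp [xvec, Pi.single_apply]⟩

theorem exists_int_eq_of_mem_integerLattice [Finite N] {l : (N → ℝ) →ₗ[ℝ] ℝ}
    (hl : ∀ v, ∃ n : ℤ, (n : ℝ) = l (Pi.single v 1)) {z : N → ℝ} (hz : z ∈ integerLattice N) :
    ∃ n : ℤ, (n : ℝ) = l z := by
  cases nonempty_fintype N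
  obtain ⟨p, rfl⟩ := mem_integerLattice.1 hz
  choose q hq using hl
  refine ⟨∑ v, p v * q v, ?_⟩
  rw [pi_eq_sum_univ' fun v => (p v : ℝ), map_sum]
  simp only [map_smul, smul_eq_mul, Int.cast_sum, Int.cast_mul, hq]

theorem exists_potential_eq_coordOn [Finite N] [Fintype A] {T : Finset A}
    (hT : IsConfigBasis ℝ (xvec t h) T) (f : A) :
    ∃ l : (N → ℝ) →ₗ[ℝ] ℝ, (∀ v, ∃ n : ℤ, (n : ℝ) = l (Pi.single v 1)) ∧
      ∀ z ∈ Submodule.span ℝ (Set.range (xvec t h)), l z = coordOn ℝ (xvec t h) T z f := by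
  classical
  cases nonempty_fintype N
  set c : (N → ℝ) →ₗ[ℝ] ℝ := LinearMap.proj f ∘ₗ coordOn ℝ (xvec t h) T
  set l : (N → ℝ) →ₗ[ℝ] ℝ := Fintype.linearCombination ℝ fun v => (⌊c (Pi.single v 1)⌋ : ℝ)
  have hl : ∀ v, l (Pi.single v 1) = ⌊c (Pi.single v 1)⌋ := fun v => by
    simp [l, Fintype.linearCombination_apply_single]
  refine ⟨l, fun v => ⟨_, (hl v).symm⟩, fun z hz => ?_⟩
  -- The differences of `c` along the edges of `T` are integers, so rounding down preserves them.
  have heq : Set.EqOn l c (xvec t h '' T) := by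
    rintro _ ⟨g, hg, rfl⟩
    have hcg : c (xvec t h g) = (if f = g then 1 else 0 : ℤ) := by
      simp [c, coordOn_self hT.1 hg, Pi.single_apply]
    have hhead : c (Pi.single (h g) 1) = c (Pi.single (t g) 1) + (if f = g then 1 else 0 : ℤ) := by
      rw [← hcg, map_xvec, add_sub_cancel]
    rw [hcg, map_xvec, hl, hl, hhead, Int.floor_add_intCast]
    push_cast
    ring
  exact LinearMap.eqOn_span heq (hT.span_eq ▸ hz)

theorem isUnimodularConfig_xvec [Finite N] [Fintype A] (t h : A → N) :
    IsUnimodularConfig (integerLattice N) (xvec t h) where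
  mem := xvec_mem_integerLattice t h
  exists_int_eq_coordOn T hT z hzL hz f := by
    obtain ⟨l, hl, hlz⟩ := exists_potential_eq_coordOn hT f
    rw [← hlz z hz]
    exact exists_int_eq_of_mem_integerLattice hl hzL

theorem cmap'_of_loop (he : t e = h e) (v : N) : cmap' t h e v = v :=
  if_neg fun hv => hv.1 he

theorem projAlong_single (he : t e ≠ h e) (v : N) :
    projAlong (LinearMap.proj (h e)) (xvec t h e) (Pi.single v 1) =
      (Pi.single (cmap' t h e v) 1 : N → ℝ) := by
  rw [projAlong_apply, xvec_eq_single_sub_single, LinearMap.proj_apply]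
  obtain rfl | hv := eq_or_ne v (h e)
  · simp [cmap', he]
  · simp [cmap', hv, hv.symm]

theorem xvec_cmap' (he : t e ≠ h e) :
    xvec (fun f : {f // f ≠ e} => cmap' t h e (t f)) (fun f => cmap' t h e (h f)) =
      contract (xvec t h) (LinearMap.proj (h e)) e := by
  ext1 f
  rw [contract, xvec_eq_single_sub_single t h f, map_sub, projAlong_single he, projAlong_single he,
    xvec_eq_single_sub_single]

theorem rootPolyOn_cmap'_of_loop (he : t e = h e) :
    rootPolyOn (fun f : {f // f ≠ e} => cmap' t h e (t f)) (fun f => cmap' t h e (h f)) Set.univ =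
      rootPolyOn t h Set.univ := by
  simp only [cmap'_of_loop he, rootPolyOn_univ]
  exact zeroHull_subtype_ne (xvec_of_loop he)

theorem stmt11_general {N A : Type*} [Fintype N] [DecidableEq N] [Finite A] (t h : A → N) (e : A)
    (p q : Polynomial ℤ)
    (hp : IsHStar (rootPolyOn (fun f : {f : A // f ≠ e} => cmap' t h e (t f.1))
      (fun f : {f : A // f ≠ e} => cmap' t h e (h f.1)) Set.univ) p)
    (hq : IsHStar (rootPolyOn t h Set.univ) q) (i : ℕ) : p.coeff i ≤ q.coeff i := by
  cases nonempty_fintype A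
  by_cases he : t e = h e
  · rw [rootPolyOn_cmap'_of_loop he] at hp
    rw [hp.unique hq]
  · rw [rootPolyOn_univ, xvec_cmap' he] at hp
    rw [rootPolyOn_univ] at hq
    refine hp.coeff_le_of_contract (isUnimodularConfig_xvec t h) (xvec_head he)
      (fun f => ?_) hq i
    obtain ⟨z, hz⟩ := mem_integerLattice.1 (xvec_mem_integerLattice t h f)
    exact ⟨z (h e), congrFun hz (h e)⟩

end Digraph

/-- the `h^*`-polynomial of `Q̃_{D/e}` is coefficientwise at most that
of `Q̃_D`.  The contraction `D/e` has edge set `E - e` and endpoint maps composed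
with the vertex identification `cmap'`; its extended root polytope is realized in
`ℝ^V` inside the coordinate subspace of the merged vertex set, which changes neither
the lattice-point counts nor the dimension. -/
theorem stmt11 (t h : E → V) (hconn : (underlyingOn t h Set.univ).Connected) (e : E)
    (p q : Polynomial ℤ)
    (hp : IsHStar (rootPolyOn (fun f : {f : E // f ≠ e} => cmap' t h e (t f.1))
      (fun f : {f : E // f ≠ e} => cmap' t h e (h f.1)) Set.univ) p)
    (hq : IsHStar (rootPolyOn t h Set.univ) q) :
    ∀ i, p.coeff i ≤ q.coeff i :=
  stmt11_general t h e p q hp hq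

end Contraction
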